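/- Telescoping bound on the variational distance of polarized distributions: let P and Q be probability distributions on {0,1}^N × 𝒴 with the same conditional Q(y|u^{1:N}) = P(y|u^{1:N}), and suppose Q(u^i|u^{1:i-1}) = P(u^i|u^{1:i-1}) for all i outside a set A ⊆ [N], while Q(u^i|u^{1:i-1}) = 1/2 for i ∈ A. Then the total variation distance satisfies 2‖Q - P‖_{TV} ≤ Σ_{i∈A} E_{u^{1:i-1}∼P} [ 2‖Q_{U^i|u^{1:i-1}} - P_{U^i|u^{1:i-1}}‖_{TV} ] ≤ Σ_{i∈A} √(2 ln 2 · (1 - H(U^i|U^{1:i-1}))), where H is in bits. -/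

import Mathlib

/-- Prefix of length `i` of a binary word of length `N`. -/
def pref {N : ℕ} (i : ℕ) (h : i ≤ N) (u : Fin N → Bool) : Fin i → Bool :=
  fun j => u (Fin.castLE h j)

/-- Marginal probability, under the joint pmf `P` on `(Fin N → Bool) × Y`, that the
first `i` bits equal `v`. -/
noncomputable def marg {N : ℕ} {Y : Type*} [Fintype Y]
    (P : (Fin N → Bool) × Y → ℝ) (i : ℕ) (h : i ≤ N) (v : Fin i → Bool) : ℝ :=
  ∑ u : Fin N → Bool, ∑ y : Y, if pref i h u = v then P (u, y) else 0

/-- Conditional probability `P(U^i = b | U^{1:i-1} = v)` (0-indexed bit `i`). -/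
noncomputable def condBit {N : ℕ} {Y : Type*} [Fintype Y]
    (P : (Fin N → Bool) × Y → ℝ) (i : ℕ) (h : i < N) (v : Fin i → Bool) (b : Bool) : ℝ :=
  marg P (i + 1) h (Fin.snoc v b) / marg P i (le_of_lt h) v

/-- Conditional entropy `H(U^i | U^{1:i-1})` in bits. -/
noncomputable def condEnt {N : ℕ} {Y : Type*} [Fintype Y]
    (P : (Fin N → Bool) × Y → ℝ) (i : ℕ) (h : i < N) : ℝ :=
  -∑ v : Fin i → Bool, ∑ b : Bool,
      marg P (i + 1) h (Fin.snoc v b) * Real.logb 2 (condBit P i h v b)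

section helpers

variable {N : ℕ} {Y : Type*} [Fintype Y]

theorem aux_pref_succ {i : ℕ} (h : i < N) (u : Fin N → Bool) (v : Fin i → Bool) (b : Bool) :
    pref (i + 1) h u = (Fin.snoc v b : Fin (i+1) → Bool) ↔ pref i h.le u = v ∧ u ⟨i, h⟩ = b := by
  constructor
  · intro e
    constructor
    · funext j
      have := congrFun e j.castSucc
      simpa [pref] using this
    · have := congrFun e (Fin.last i)
      rw [Fin.snoc_last] at this
      exact this
  · rintro ⟨rfl, rfl⟩
    funext j
    refine Fin.lastCases ?_ (fun j => ?_) j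
    · simp [pref]; rfl
    · simp [pref]

theorem aux_marg_nonneg {P : (Fin N → Bool) × Y → ℝ} (hP0 : ∀ z, 0 ≤ P z) (i : ℕ) (h : i ≤ N)
    (v : Fin i → Bool) : 0 ≤ marg P i h v := by
  unfold marg
  refine Finset.sum_nonneg fun u _ => Finset.sum_nonneg fun y _ => ?_
  split_ifs
  · exact hP0 _
  · exact le_rfl

theorem aux_marg_succ (P : (Fin N → Bool) × Y → ℝ) (i : ℕ) (h : i < N) (v : Fin i → Bool) :
    ∑ b : Bool, marg P (i + 1) h (Fin.snoc v b) = marg P i h.le v := by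
  unfold marg
  rw [Finset.sum_comm]
  refine Finset.sum_congr rfl fun u _ => ?_
  rw [Finset.sum_comm]
  refine Finset.sum_congr rfl fun y _ => ?_
  simp only [aux_pref_succ]
  by_cases hv : pref i h.le u = v <;> simp [hv]

theorem aux_marg_sum (P : (Fin N → Bool) × Y → ℝ) (i : ℕ) (h : i ≤ N) :
    ∑ v, marg P i h v = ∑ z, P z := by
  unfold marg
  rw [Finset.sum_comm, Fintype.sum_prod_type]
  refine Finset.sum_congr rfl fun u _ => ?_
  rw [Finset.sum_comm]
  refine Finset.sum_congr rfl fun y _ => ?_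
  simp

theorem aux_marg_full (P : (Fin N → Bool) × Y → ℝ) (u : Fin N → Bool) :
    marg P N le_rfl u = ∑ y, P (u, y) := by
  unfold marg
  have : ∀ w : Fin N → Bool, pref N le_rfl w = w := fun w => rfl
  simp only [this]
  rw [Finset.sum_comm]
  refine Finset.sum_congr rfl fun y _ => ?_
  simp

theorem aux_chain {P : (Fin N → Bool) × Y → ℝ} (hP0 : ∀ z, 0 ≤ P z) (i : ℕ) (h : i < N)
    (v : Fin i → Bool) (b : Bool) :
    marg P (i + 1) h (Fin.snoc v b) = marg P i h.le v * condBit P i h v b := by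
  unfold condBit
  by_cases h0 : marg P i h.le v = 0
  · have h1 := aux_marg_succ P i h v
    have h2 : marg P (i + 1) h (Fin.snoc v b) ≤ ∑ b : Bool, marg P (i + 1) h (Fin.snoc v b) :=
      Finset.single_le_sum (f := fun b : Bool => marg P (i + 1) h (Fin.snoc v b))
        (fun b _ => aux_marg_nonneg hP0 (i+1) h _) (Finset.mem_univ b)
    have h3 := aux_marg_nonneg hP0 (i+1) h (Fin.snoc v b)
    rw [h0, zero_mul]; linarith
  · rw [mul_div_cancel₀ _ h0]

theorem aux_cond_nonneg {P : (Fin N → Bool) × Y → ℝ} (hP0 : ∀ z, 0 ≤ P z) (i : ℕ) (h : i < N)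
    (v : Fin i → Bool) (b : Bool) : 0 ≤ condBit P i h v b :=
  div_nonneg (aux_marg_nonneg hP0 _ _ _) (aux_marg_nonneg hP0 _ _ _)

theorem aux_cond_sum (P : (Fin N → Bool) × Y → ℝ) (i : ℕ) (h : i < N)
    (v : Fin i → Bool) (h0 : marg P i h.le v ≠ 0) : ∑ b, condBit P i h v b = 1 := by
  unfold condBit
  rw [← Finset.sum_div, aux_marg_succ, div_self h0]

theorem aux_cond_sum_le (P : (Fin N → Bool) × Y → ℝ) (i : ℕ) (h : i < N)
    (v : Fin i → Bool) : ∑ b, condBit P i h v b ≤ 1 := by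
  unfold condBit
  rw [← Finset.sum_div, aux_marg_succ]
  exact div_self_le_one _

theorem aux_step {P Q : (Fin N → Bool) × Y → ℝ} (hP0 : ∀ z, 0 ≤ P z) (hQ0 : ∀ z, 0 ≤ Q z)
    (i : ℕ) (h : i < N) :
    ∑ v, |marg Q (i+1) h v - marg P (i+1) h v| ≤ ∑ v, |marg Q i h.le v - marg P i h.le v| +
      ∑ v, marg P i h.le v * ∑ b, |condBit Q i h v b - condBit P i h v b| := by
  rw [← Equiv.sum_comp (Fin.snocEquiv (fun _ : Fin (i+1) => Bool)), Fintype.sum_prod_type_right,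
    ← Finset.sum_add_distrib]
  refine Finset.sum_le_sum fun v _ => ?_
  have key : ∀ b, |marg Q (i+1) h (Fin.snoc v b) - marg P (i+1) h (Fin.snoc v b)| ≤
      |marg Q i h.le v - marg P i h.le v| * condBit Q i h v b +
        marg P i h.le v * |condBit Q i h v b - condBit P i h v b| := by
    intro b
    rw [aux_chain hP0, aux_chain hQ0]
    have e : marg Q i h.le v * condBit Q i h v b - marg P i h.le v * condBit P i h v b =
      (marg Q i h.le v - marg P i h.le v) * condBit Q i h v b +
        marg P i h.le v * (condBit Q i h v b - condBit P i h v b) := by ring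
    rw [e]
    refine (abs_add_le _ _).trans ?_
    rw [abs_mul, abs_mul, abs_of_nonneg (aux_cond_nonneg hQ0 i h v b),
      abs_of_nonneg (aux_marg_nonneg hP0 i h.le v)]
  calc _ ≤ ∑ b, (|marg Q i h.le v - marg P i h.le v| * condBit Q i h v b +
        marg P i h.le v * |condBit Q i h v b - condBit P i h v b|) :=
        Finset.sum_le_sum fun b _ => key b
    _ = |marg Q i h.le v - marg P i h.le v| * ∑ b, condBit Q i h v b +
        marg P i h.le v * ∑ b, |condBit Q i h v b - condBit P i h v b| := by
        rw [Finset.sum_add_distrib, Finset.mul_sum, Finset.mul_sum]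
    _ ≤ _ := by
        have := mul_le_mul_of_nonneg_left (aux_cond_sum_le Q i h v)
          (abs_nonneg (marg Q i h.le v - marg P i h.le v))
        linarith

theorem aux_last {P Q : (Fin N → Bool) × Y → ℝ} (hP0 : ∀ z, 0 ≤ P z) (hQ0 : ∀ z, 0 ≤ Q z)
    (hchan : ∀ (u : Fin N → Bool) (y : Y),
      Q (u, y) / (∑ y', Q (u, y')) = P (u, y) / (∑ y', P (u, y'))) :
    ∑ z, |Q z - P z| ≤ ∑ v, |marg Q N le_rfl v - marg P N le_rfl v| := by
  have eqn : ∀ {R : (Fin N → Bool) × Y → ℝ}, (∀ z, 0 ≤ R z) → ∀ u y,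
      R (u, y) = (∑ y', R (u, y')) * (R (u, y) / ∑ y', R (u, y')) := by
    intro R hR u y
    by_cases h0 : ∑ y', R (u, y') = 0
    · rw [h0, zero_mul]
      exact (Finset.sum_eq_zero_iff_of_nonneg fun y _ => hR _).1 h0 y (Finset.mem_univ y)
    · rw [mul_div_cancel₀ _ h0]
  rw [Fintype.sum_prod_type]
  refine Finset.sum_le_sum fun u _ => ?_
  rw [aux_marg_full, aux_marg_full]
  have : ∀ y, |Q (u, y) - P (u, y)| =
      |∑ y', Q (u, y') - ∑ y', P (u, y')| * (Q (u, y) / ∑ y', Q (u, y')) := by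
    intro y
    conv_lhs => rw [eqn hQ0 u y, eqn hP0 u y, ← hchan, ← sub_mul, abs_mul]
    rw [abs_of_nonneg (div_nonneg (hQ0 _) (Finset.sum_nonneg fun y _ => hQ0 _))]
  simp only [this]
  rw [← Finset.mul_sum, ← Finset.sum_div]
  exact mul_le_of_le_one_right (abs_nonneg _) (div_self_le_one _)

theorem aux_pinsker_pos {x : ℝ} (h0 : 0 ≤ x) (h1 : x ≤ 1) :
    x ^ 2 ≤ (1 + x) * Real.log (1 + x) + (1 - x) * Real.log (1 - x) := by
  have hm : MonotoneOn (fun x : ℝ => (1 + x) * Real.log (1 + x) + (1 - x) * Real.log (1 - x) - x ^ 2)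
      (Set.Icc 0 1) := by
    have hd : ∀ x ∈ Set.Ioo (0:ℝ) 1, HasDerivAt
      (fun x : ℝ => (1 + x) * Real.log (1 + x) + (1 - x) * Real.log (1 - x) - x ^ 2)
      (Real.log (1 + x) - Real.log (1 - x) - 2 * x) x := by
      intro x hx
      have a1 : (1 + x) ≠ 0 := by linarith [hx.1]
      have a2 : (1 - x) ≠ 0 := by linarith [hx.2]
      have b1 := (Real.hasDerivAt_mul_log a1).comp x ((hasDerivAt_id x).const_add 1)
      have b2 := (Real.hasDerivAt_mul_log a2).comp x ((hasDerivAt_id x).const_sub 1)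
      have b3 := (b1.add b2).sub (hasDerivAt_pow 2 x)
      convert! b3 using 1
      push_cast; ring
    refine monotoneOn_of_deriv_nonneg (convex_Icc 0 1) ?_ ?_ ?_
    · refine Continuous.continuousOn ?_
      have c := Real.continuous_mul_log
      exact ((c.comp (continuous_const.add continuous_id)).add
        (c.comp (continuous_const.sub continuous_id))).sub (continuous_pow 2)
    · rw [interior_Icc]
      exact fun x hx => (hd x hx).differentiableAt.differentiableWithinAt
    · rw [interior_Icc]
      intro x hx
      rw [(hd x hx).deriv]
      have hs := Real.hasSum_log_sub_log_of_abs_lt_one (x := x) (by rw [abs_lt]; constructor <;> linarith [hx.1, hx.2])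
      have := hs.summable.sum_le_tsum {0} (fun k _ => by have := hx.1.le; positivity)
      rw [hs.tsum_eq] at this
      simp at this
      linarith
  have := hm (Set.left_mem_Icc.2 zero_le_one) ⟨h0, h1⟩ h0
  simp at this
  linarith

theorem aux_pinsker {x : ℝ} (h0 : -1 ≤ x) (h1 : x ≤ 1) :
    x ^ 2 ≤ (1 + x) * Real.log (1 + x) + (1 - x) * Real.log (1 - x) := by
  rcases le_total 0 x with h | h
  · exact aux_pinsker_pos h h1
  · have := aux_pinsker_pos (x := -x) (by linarith) (by linarith)
    simp only [sub_neg_eq_add, ← sub_eq_add_neg] at this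
    nlinarith

theorem aux_pinsker_bit {a b : ℝ} (ha : 0 ≤ a) (hb : 0 ≤ b) (hab : a + b = 1) :
    (|1 / 2 - a| + |1 / 2 - b|) ^ 2 ≤
      2 * Real.log 2 * (1 + (a * Real.logb 2 a + b * Real.logb 2 b)) := by
  have e : ∀ t : ℝ, (2 * t) * Real.log (2 * t) = 2 * t * Real.log 2 + 2 * (t * Real.log t) := by
    intro t
    by_cases ht : t = 0
    · simp [ht]
    · rw [Real.log_mul two_ne_zero ht]; ring
  have p := aux_pinsker (x := 2 * a - 1) (by linarith) (by linarith)
  rw [show 1 + (2 * a - 1) = 2 * a by ring, show 1 - (2 * a - 1) = 2 * b by linarith, e, e] at p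
  have l2 : Real.log 2 ≠ 0 := (Real.log_pos one_lt_two).ne'
  have r : 2 * Real.log 2 * (1 + (a * Real.logb 2 a + b * Real.logb 2 b)) =
      2 * Real.log 2 + 2 * (a * Real.log a) + 2 * (b * Real.log b) := by
    unfold Real.logb; field_simp; ring
  have l : (|1 / 2 - a| + |1 / 2 - b|) ^ 2 = (2 * a - 1) ^ 2 := by
    rw [show 1 / 2 - b = -(1 / 2 - a) by linarith, abs_neg, ← two_mul, mul_pow, sq_abs]; ring
  rw [r, l]
  have : 2 * a * Real.log 2 + 2 * b * Real.log 2 = 2 * Real.log 2 := by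
    rw [← add_mul, ← mul_add, hab]; ring
  linarith

theorem aux_second {P Q : (Fin N → Bool) × Y → ℝ} (hP0 : ∀ z, 0 ≤ P z) (hP1 : ∑ z, P z = 1)
    (i : ℕ) (h : i < N) (hon : ∀ v b, condBit Q i h v b = 1 / 2) :
    ∑ v, marg P i h.le v * ∑ b, |condBit Q i h v b - condBit P i h v b| ≤
      Real.sqrt (2 * Real.log 2 * (1 - condEnt P i h)) := by
  have hs : ∑ v, marg P i h.le v = 1 := by rw [aux_marg_sum, hP1]
  have hn := aux_marg_nonneg hP0 i h.le
  apply Real.le_sqrt_of_sq_le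
  have cs := Finset.sum_sq_le_sum_mul_sum_of_sq_eq_mul Finset.univ
    (r := fun v => marg P i h.le v * ∑ b, |condBit Q i h v b - condBit P i h v b|)
    (f := fun v => marg P i h.le v)
    (g := fun v => marg P i h.le v * (∑ b, |condBit Q i h v b - condBit P i h v b|) ^ 2)
    (fun v _ => hn v) (fun v _ => mul_nonneg (hn v) (sq_nonneg _)) (fun v _ => by ring)
  rw [hs, one_mul] at cs
  refine cs.trans ?_
  have e : 1 - condEnt P i h = ∑ v, marg P i h.le v *
      (1 + ∑ b, condBit P i h v b * Real.logb 2 (condBit P i h v b)) := by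
    unfold condEnt
    simp only [mul_add, mul_one, Finset.sum_add_distrib, hs, sub_neg_eq_add, Finset.mul_sum,
      aux_chain hP0, mul_assoc]
  rw [e, Finset.mul_sum]
  refine Finset.sum_le_sum fun v _ => ?_
  by_cases h0 : marg P i h.le v = 0
  · simp [h0]
  · have c1 := aux_cond_sum P i h v h0
    have c0 := aux_cond_nonneg hP0 i h v
    simp only [Fintype.sum_bool, hon] at c1 ⊢
    have := mul_le_mul_of_nonneg_left (aux_pinsker_bit (c0 true) (c0 false) c1) (hn v)
    linarith

end helpers

/-- Telescoping bound on the variational distance of polarized distributions, with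
the Pinsker step. -/
theorem polarized_tv_telescoping {N : ℕ} {Y : Type*} [Fintype Y]
    (P Q : (Fin N → Bool) × Y → ℝ)
    (hP0 : ∀ z, 0 ≤ P z) (hP1 : ∑ z, P z = 1)
    (hQ0 : ∀ z, 0 ≤ Q z) (hQ1 : ∑ z, Q z = 1)
    (A : Finset (Fin N))
    (hchan : ∀ (u : Fin N → Bool) (y : Y),
      Q (u, y) / (∑ y', Q (u, y')) = P (u, y) / (∑ y', P (u, y')))
    (hoffA : ∀ i : Fin N, i ∉ A → ∀ (v : Fin i.val → Bool) (b : Bool),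
      condBit Q i.val i.isLt v b = condBit P i.val i.isLt v b)
    (honA : ∀ i : Fin N, i ∈ A → ∀ (v : Fin i.val → Bool) (b : Bool),
      condBit Q i.val i.isLt v b = 1 / 2) :
    (∑ z : (Fin N → Bool) × Y, |Q z - P z|)
        ≤ (∑ i ∈ A, ∑ v : Fin i.val → Bool, marg P i.val i.isLt.le v *
            ∑ b : Bool, |condBit Q i.val i.isLt v b - condBit P i.val i.isLt v b|)
    ∧ (∑ i ∈ A, ∑ v : Fin i.val → Bool, marg P i.val i.isLt.le v *
            ∑ b : Bool, |condBit Q i.val i.isLt v b - condBit P i.val i.isLt v b|)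
        ≤ ∑ i ∈ A, Real.sqrt (2 * Real.log 2 * (1 - condEnt P i.val i.isLt)) := by
  constructor
  · have ind : ∀ k (hk : k ≤ N), ∑ v, |marg Q k hk v - marg P k hk v| ≤
        ∑ i ∈ A.filter (fun i => i.val < k), ∑ v : Fin i.val → Bool, marg P i.val i.isLt.le v *
            ∑ b : Bool, |condBit Q i.val i.isLt v b - condBit P i.val i.isLt v b| := by
      intro k
      induction k with
      | zero =>
        intro hk
        have e : ∀ (R : (Fin N → Bool) × Y → ℝ) (v : Fin 0 → Bool), marg R 0 hk v = ∑ z, R z := by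
          intro R v
          rw [← aux_marg_sum R 0 hk, Fintype.sum_unique, Subsingleton.elim v]
        simp [e, hP1, hQ1]
      | succ k ih =>
        intro hk
        refine (aux_step hP0 hQ0 k hk).trans ?_
        have ih' := ih (Nat.le_of_succ_le hk)
        by_cases hA : (⟨k, hk⟩ : Fin N) ∈ A
        · have hf : A.filter (fun i => i.val < k + 1) =
              insert ⟨k, hk⟩ (A.filter (fun i => i.val < k)) := by
            ext j
            simp only [Finset.mem_filter, Finset.mem_insert, Fin.ext_iff]
            constructor
            · rintro ⟨a, b⟩
              rcases Nat.lt_succ_iff_lt_or_eq.1 b with c | c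
              · exact Or.inr ⟨a, c⟩
              · exact Or.inl c
            · rintro (c | ⟨a, b⟩)
              · have : j = ⟨k, hk⟩ := Fin.ext c
                subst this
                exact ⟨hA, Nat.lt_succ_self _⟩
              · exact ⟨a, by omega⟩
          rw [hf, Finset.sum_insert (by simp)]
          linarith
        · have hz := hoffA ⟨k, hk⟩ hA
          have hz' : ∑ v, marg P k (Nat.le_of_succ_le hk) v *
              ∑ b, |condBit Q k hk v b - condBit P k hk v b| = 0 := by
            refine Finset.sum_eq_zero fun v _ => ?_
            rw [Finset.sum_eq_zero, mul_zero]
            intro b _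
            rw [hz v b, sub_self, abs_zero]
          rw [hz', add_zero]
          refine ih'.trans (le_of_eq ?_)
          congr 1
          ext j
          simp only [Finset.mem_filter]
          constructor
          · rintro ⟨a, b⟩
            exact ⟨a, by omega⟩
          · rintro ⟨a, b⟩
            refine ⟨a, ?_⟩
            rcases Nat.lt_succ_iff_lt_or_eq.1 b with c | c
            · exact c
            · exact absurd ((Fin.ext c : j = ⟨k, hk⟩) ▸ a) hA
    refine (aux_last hP0 hQ0 hchan).trans ((ind N le_rfl).trans (le_of_eq ?_))
    rw [Finset.filter_true_of_mem (fun i _ => i.isLt)]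
  · exact Finset.sum_le_sum fun i hi => aux_second hP0 hP1 i.val i.isLt (honA i hi)
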